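/- arXiv:2402.08044 — 2 statements merged into one kernel-verified Lean document; each statement's English description precedes it below -/
import Mathlib

section
/- For every real s > 0 there exists an integrable function g ∈ L¹(ℝⁿ) whose Fourier transform is the function ξ ↦ (1 + |ξ|²)^(−s/2). (The Bessel kernel L_s is an L¹ function for s > 0.) -/
open MeasureTheory Complex
open scoped FourierTransform ENNReal

section FourierMixture

variable {V : Type*} [NormedAddCommGroup V] [InnerProductSpace ℝ V]

variable (V) in
/-- The Gaussian on `V` whose Fourier transform is `ξ ↦ exp (-t ‖ξ‖²)`. -/
noncomputable def heatGaussian (t : ℝ) (x : V) : ℝ :=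
  (Real.pi / t) ^ (Module.finrank ℝ V / 2 : ℝ) * Real.exp (-(Real.pi ^ 2 / t) * ‖x‖ ^ 2)

theorem heatGaussian_nonneg {t : ℝ} (ht : 0 < t) (x : V) : 0 ≤ heatGaussian V t x := by
  unfold heatGaussian
  positivity

variable [MeasurableSpace V] [BorelSpace V]

theorem measurable_heatGaussian :
    Measurable fun p : V × ℝ ↦ heatGaussian V p.2 p.1 := by
  unfold heatGaussian
  fun_prop

variable [FiniteDimensional ℝ V]

theorem fourier_const_smul_apply (c : ℂ) (f : V → ℂ) (ξ : V) :
    𝓕 (c • f) ξ = c * 𝓕 f ξ := by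
  simp only [Real.fourier_eq, Pi.smul_apply, Circle.smul_def, smul_eq_mul, mul_left_comm _ c,
    integral_const_mul]

/-- The Fourier transform commutes with integration over a parameter. -/
theorem fourier_integral_param {T : Type*} [MeasurableSpace T] {μ : Measure T} [SFinite μ]
    {K : V → T → ℂ} (hK : Integrable (Function.uncurry K) (volume.prod μ)) (ξ : V) :
    𝓕 (fun x ↦ ∫ t, K x t ∂μ) ξ = ∫ t, 𝓕 (fun x ↦ K x t) ξ ∂μ := by
  simp only [Real.fourier_eq, Circle.smul_def, smul_eq_mul, ← integral_const_mul]
  refine integral_integral_swap ?_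
  refine hK.bdd_mul (c := 1) (f := fun p : V × T ↦ (𝐞 (-inner ℝ p.1 ξ) : ℂ)) ?_ ?_
  · have : Continuous fun x : V ↦ (𝐞 (-inner ℝ x ξ) : ℂ) := by fun_prop
    exact (this.measurable.comp measurable_fst).aestronglyMeasurable
  · exact Filter.Eventually.of_forall fun p ↦ (Circle.norm_coe _).le

theorem integral_heatGaussian {t : ℝ} (ht : 0 < t) : ∫ x : V, heatGaussian V t x = 1 := by
  have hpi := Real.pi_pos
  simp only [heatGaussian]
  rw [integral_const_mul, GaussianFourier.integral_rexp_neg_mul_sq_norm (by positivity),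
    ← Real.mul_rpow (by positivity) (by positivity)]
  rw [show Real.pi / t * (Real.pi / (Real.pi ^ 2 / t)) = 1 by field_simp, Real.one_rpow]

theorem integrable_heatGaussian {t : ℝ} (ht : 0 < t) : Integrable (heatGaussian V t) :=
  .of_integral_ne_zero (by rw [integral_heatGaussian ht]; exact one_ne_zero)

theorem fourier_heatGaussian {t : ℝ} (ht : 0 < t) (ξ : V) :
    𝓕 (fun x : V ↦ (heatGaussian V t x : ℂ)) ξ = (Real.exp (-(t * ‖ξ‖ ^ 2)) : ℂ) := by
  have hpi := Real.pi_pos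
  have hb : 0 < ((Real.pi ^ 2 / t : ℝ) : ℂ).re := by rw [ofReal_re]; positivity
  have key := fourier_gaussian_innerProductSpace hb ξ
  have hG : (fun x : V ↦ (heatGaussian V t x : ℂ)) =
      (((Real.pi / t) ^ (Module.finrank ℝ V / 2 : ℝ) : ℝ) : ℂ) •
        fun x : V ↦ cexp (-((Real.pi ^ 2 / t : ℝ) : ℂ) * ‖x‖ ^ 2) := by
    ext x
    simp [heatGaussian]
  have hconst : (Real.pi : ℂ) / ((Real.pi ^ 2 / t : ℝ) : ℂ) = ((t / Real.pi : ℝ) : ℂ) := by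
    rw [← ofReal_div]
    congr 1
    field_simp
  have hexp : -(Real.pi : ℂ) ^ 2 * ‖ξ‖ ^ 2 / ((Real.pi ^ 2 / t : ℝ) : ℂ) =
      ((-(t * ‖ξ‖ ^ 2) : ℝ) : ℂ) := by
    have ht' : (t : ℂ) ≠ 0 := by exact_mod_cast ht.ne'
    have hpi' : (Real.pi : ℂ) ≠ 0 := by exact_mod_cast hpi.ne'
    push_cast
    field_simp
  have hpow : ((t / Real.pi : ℝ) : ℂ) ^ ((Module.finrank ℝ V : ℂ) / 2) =
      (((t / Real.pi) ^ (Module.finrank ℝ V / 2 : ℝ) : ℝ) : ℂ) := by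
    rw [ofReal_cpow (by positivity)]
    push_cast
    rfl
  rw [hG, fourier_const_smul_apply, key, hconst, hexp, hpow,
    ← mul_assoc, ← ofReal_mul, ← Real.mul_rpow (by positivity) (by positivity),
    show Real.pi / t * (t / Real.pi) = 1 by field_simp, Real.one_rpow, ofReal_one, one_mul,
    ofReal_exp]

theorem integrable_gamma_mul_heatGaussian {a : ℝ} (ha : 0 < a) :
    Integrable (Function.uncurry fun (x : V) (t : ℝ) ↦
      ((t ^ (a - 1) * Real.exp (-t) * heatGaussian V t x : ℝ) : ℂ))
      (volume.prod (volume.restrict (Set.Ioi 0))) := by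
  have hmeas : Measurable (Function.uncurry fun (x : V) (t : ℝ) ↦
      ((t ^ (a - 1) * Real.exp (-t) * heatGaussian V t x : ℝ) : ℂ)) :=
    Complex.measurable_ofReal.comp
      (Measurable.mul (by fun_prop) measurable_heatGaussian)
  rw [integrable_prod_iff' hmeas.aestronglyMeasurable]
  constructor
  · filter_upwards [ae_restrict_mem measurableSet_Ioi] with t ht
    exact ((integrable_heatGaussian (V := V) ht).const_mul
      (t ^ (a - 1) * Real.exp (-t))).ofReal (𝕜 := ℂ)
  · have hΓ : IntegrableOn (fun t : ℝ ↦ Real.exp (-t) * t ^ (a - 1)) (Set.Ioi 0) :=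
      Real.GammaIntegral_convergent ha
    refine hΓ.congr ?_
    filter_upwards [ae_restrict_mem measurableSet_Ioi] with t ht
    have ht' : (0 : ℝ) < t := ht
    have hnorm (x : V) : ‖((t ^ (a - 1) * Real.exp (-t) * heatGaussian V t x : ℝ) : ℂ)‖ =
        t ^ (a - 1) * Real.exp (-t) * heatGaussian V t x := by
      rw [norm_real, Real.norm_of_nonneg]
      have := heatGaussian_nonneg ht' x
      positivity
    simp only [Function.uncurry, hnorm]
    rw [integral_const_mul, integral_heatGaussian ht', mul_one, mul_comm]

end FourierMixture

/-- The Bessel kernel `L_s` is an `L¹` function for `s > 0`: there is an integrable `g`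
whose Fourier transform is `ξ ↦ (1+|ξ|²)^(-s/2)`. -/
theorem besselKernel_integrable (n : ℕ) (s : ℝ) (hs : 0 < s) :
    ∃ g : EuclideanSpace ℝ (Fin n) → ℂ, Integrable g ∧
      ∀ ξ : EuclideanSpace ℝ (Fin n),
        𝓕 g ξ = ((1 : ℂ) + (‖ξ‖ : ℂ) ^ 2) ^ (-(s : ℂ) / 2) := by
  have ha : 0 < s / 2 := by positivity
  have hΓ : (Real.Gamma (s / 2) : ℂ) ≠ 0 := by exact_mod_cast (Real.Gamma_pos_of_pos ha).ne'
  have hK := integrable_gamma_mul_heatGaussian (V := EuclideanSpace ℝ (Fin n)) ha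
  refine ⟨(Real.Gamma (s / 2) : ℂ)⁻¹ • fun x ↦ ∫ t in Set.Ioi (0 : ℝ),
    ((t ^ (s / 2 - 1) * Real.exp (-t) * heatGaussian _ t x : ℝ) : ℂ),
    hK.integral_prod_left.smul _, fun ξ ↦ ?_⟩
  have hr : 0 < 1 + ‖ξ‖ ^ 2 := by positivity
  have hslice : ∀ t ∈ Set.Ioi (0 : ℝ), 𝓕 (fun x : EuclideanSpace ℝ (Fin n) ↦
      ((t ^ (s / 2 - 1) * Real.exp (-t) * heatGaussian _ t x : ℝ) : ℂ)) ξ =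
      ((t ^ (s / 2 - 1) * Real.exp (-((1 + ‖ξ‖ ^ 2) * t)) : ℝ) : ℂ) := by
    intro t ht
    have hsmul : (fun x : EuclideanSpace ℝ (Fin n) ↦
        ((t ^ (s / 2 - 1) * Real.exp (-t) * heatGaussian _ t x : ℝ) : ℂ)) =
        ((t ^ (s / 2 - 1) * Real.exp (-t) : ℝ) : ℂ) • fun x ↦ (heatGaussian _ t x : ℂ) := by
      ext x
      simp
    rw [hsmul, fourier_const_smul_apply, fourier_heatGaussian ht,
      ← ofReal_mul, mul_assoc, ← Real.exp_add]
    congr 3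
    ring
  rw [fourier_const_smul_apply, fourier_integral_param hK,
    setIntegral_congr_fun measurableSet_Ioi hslice, integral_complex_ofReal,
    Real.integral_rpow_mul_exp_neg_mul_Ioi ha hr, ofReal_mul, mul_comm, mul_assoc,
    mul_inv_cancel₀ hΓ, mul_one, one_div, Real.inv_rpow hr.le, ← Real.rpow_neg hr.le,
    ofReal_cpow hr.le]
  push_cast
  rw [neg_div]
end

section
/- For every multi-index α on ℝⁿ and every real s > |α| (where |α| is the order of α), there exists an integrable function g ∈ L¹(ℝⁿ) whose Fourier transform is the function ξ ↦ (2πi ξ)^α · (1 + |ξ|²)^(−s/2). (That is, L_s * ∂^α δ ∈ L¹(ℝⁿ) whenever s > |α|.) -/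
open MeasureTheory Complex
open scoped FourierTransform ENNReal

section Gaussian
open Polynomial

theorem integrable_polynomial_mul_gaussian {b : ℝ} (hb : 0 < b) (P : ℂ[X]) :
    Integrable fun x : ℝ ↦ P.eval (x : ℂ) * cexp (-b * x ^ 2) := by
  induction P using Polynomial.induction_on' with
  | add p q hp hq =>
    simp only [eval_add, add_mul]
    exact hp.add hq
  | monomial k a =>
    have h := (integrable_rpow_mul_exp_neg_mul_sq hb (s := k)
      (by linarith [k.cast_nonneg (α := ℝ)])).ofReal (𝕜 := ℂ)
    refine (h.const_mul a).congr (.of_forall fun x ↦ ?_)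
    simp [mul_assoc]

theorem hasDerivAt_polynomial_mul_gaussian (b : ℝ) (P : ℂ[X]) (x : ℝ) :
    HasDerivAt (fun x : ℝ ↦ P.eval (x : ℂ) * cexp (-b * x ^ 2))
      ((derivative P - C (2 * b : ℂ) * X * P).eval (x : ℂ) * cexp (-b * x ^ 2)) x := by
  have h : HasDerivAt (fun z : ℂ ↦ P.eval z * cexp (-b * z ^ 2))
      (P.derivative.eval (x : ℂ) * cexp (-b * x ^ 2) +
        P.eval (x : ℂ) * (cexp (-b * x ^ 2) * (-b * (2 * x)))) x := by
    refine (P.hasDerivAt _).mul (HasDerivAt.cexp ?_)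
    simpa using (hasDerivAt_pow 2 (x : ℂ)).const_mul (-b : ℂ)
  refine h.comp_ofReal.congr_deriv ?_
  simp only [eval_sub, eval_mul, eval_C, eval_X]
  ring

/-- Every monomial times the standard Gaussian is the Fourier transform of a polynomial times
a Gaussian. -/
theorem exists_fourier_polynomial_mul_gaussian_eq (k : ℕ) :
    ∃ P : ℂ[X], ∀ t : ℝ,
      𝓕 (fun x : ℝ ↦ P.eval (x : ℂ) * cexp (-(Real.pi ^ 2 : ℝ) * x ^ 2)) t =
        (2 * Real.pi * I * t) ^ k * cexp (-t ^ 2) := by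
  have hb : 0 < Real.pi ^ 2 := by positivity
  induction k with
  | zero =>
    have hπ : (Real.pi : ℂ) ≠ 0 := by exact_mod_cast Real.pi_ne_zero
    refine ⟨C ((Real.pi : ℂ) ^ (1 / 2 : ℂ)), fun t ↦ ?_⟩
    have h := congrFun (fourier_gaussian_pi (b := Real.pi) (by simpa using Real.pi_pos)) t
    have hc : (Real.pi : ℂ) ^ (1 / 2 : ℂ) ≠ 0 := by simp [cpow_eq_zero_iff, hπ]
    rw [Real.fourier_eq] at h ⊢
    have h' : ∀ x : ℝ, -(Real.pi : ℂ) * Real.pi * x ^ 2 = -(Real.pi ^ 2 : ℝ) * x ^ 2 := by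
      intro x; push_cast; ring
    simp only [h', Circle.smul_def, smul_eq_mul] at h
    simp only [eval_C, Circle.smul_def, smul_eq_mul, mul_left_comm _ ((Real.pi : ℂ) ^ (1 / 2 : ℂ)),
      integral_const_mul]
    rw [h, neg_div, div_self hπ]
    field_simp
  | succ k ih =>
    obtain ⟨P, hP⟩ := ih
    refine ⟨derivative P - C (2 * (Real.pi ^ 2 : ℝ) : ℂ) * X * P, fun t ↦ ?_⟩
    have hd := hasDerivAt_polynomial_mul_gaussian (Real.pi ^ 2) P
    have hderiv := funext fun x ↦ (hd x).deriv
    have h := congrFun (Real.fourier_deriv (integrable_polynomial_mul_gaussian hb P)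
      (fun x ↦ (hd x).differentiableAt)
      (by rw [hderiv]; exact integrable_polynomial_mul_gaussian hb _)) t
    rw [hderiv] at h
    rw [h, hP, smul_eq_mul]
    ring

end Gaussian

theorem fourier_euclideanSpace_prod {ι : Type*} [Fintype ι] (f : ι → ℝ → ℂ)
    (ξ : EuclideanSpace ℝ ι) :
    𝓕 (fun x : EuclideanSpace ℝ ι ↦ ∏ i, f i (x i)) ξ = ∏ i, 𝓕 (f i) (ξ i) := by
  simp only [Real.fourier_eq', smul_eq_mul]
  rw [← integral_fintype_prod_volume_eq_prod,
    ← (PiLp.volume_preserving_ofLp ι).integral_comp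
      (MeasurableEquiv.toLp 2 (ι → ℝ)).symm.measurableEmbedding]
  congr 1 with x
  rw [Finset.prod_mul_distrib, ← Complex.exp_sum, PiLp.inner_apply, ← Finset.sum_mul,
    ← ofReal_sum, ← Finset.mul_sum]

theorem integrable_euclideanSpace_prod {ι : Type*} [Fintype ι] {f : ι → ℝ → ℂ}
    (hf : ∀ i, Integrable (f i)) :
    Integrable fun x : EuclideanSpace ℝ ι ↦ ∏ i, f i (x i) :=
  (PiLp.volume_preserving_ofLp ι).integrable_comp_of_integrable (Integrable.fintype_prod hf)

/-- A weighted superposition of dilates of an integrable function is integrable, and its Fourier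
transform is the corresponding superposition of dilates. -/
theorem exists_integrable_fourier_eq_integral_dilation {V : Type*} [NormedAddCommGroup V]
    [InnerProductSpace ℝ V] [FiniteDimensional ℝ V] [MeasurableSpace V] [BorelSpace V]
    {G : V → ℂ} (hG : Integrable G) (hGc : Continuous G) {w : ℝ → ℂ}
    (hw : IntegrableOn w (Set.Ioi 0)) :
    ∃ g : V → ℂ, Integrable g ∧ ∀ ξ, 𝓕 g ξ = ∫ r in Set.Ioi 0, w r * 𝓕 G (r • ξ) := by
  set d := Module.finrank ℝ V
  set μ : Measure ℝ := volume.restrict (Set.Ioi 0)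
  set K : V × ℝ → ℂ := fun p ↦ w p.2 * (((p.2 ^ d)⁻¹ : ℝ) * G (p.2⁻¹ • p.1)) with hK_def
  have hpos : ∀ᵐ r ∂μ, 0 < r := ae_restrict_mem measurableSet_Ioi
  have hK : Integrable K (volume.prod μ) := by
    have hm : AEStronglyMeasurable K (volume.prod μ) := by
      refine hw.aestronglyMeasurable.comp_snd.mul (Measurable.aestronglyMeasurable ?_)
      have := hGc.measurable
      fun_prop
    refine (integrable_prod_iff' hm).2 ⟨?_, ?_⟩
    · filter_upwards [hpos] with r hr
      exact ((hG.comp_smul (inv_ne_zero hr.ne')).const_mul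
        (((r ^ d)⁻¹ : ℝ) : ℂ)).const_mul (w r)
    · refine (hw.norm.mul_const (∫ x, ‖G x‖)).congr ?_
      filter_upwards [hpos] with r hr
      simp only [hK_def, norm_mul, integral_const_mul]
      rw [Measure.integral_comp_inv_smul_of_nonneg volume (fun x ↦ ‖G x‖) hr.le, norm_real,
        Real.norm_of_nonneg (by positivity), smul_eq_mul, inv_mul_cancel_left₀ (by positivity)]
  refine ⟨fun x ↦ ∫ r, K (x, r) ∂μ, hK.integral_prod_left, fun ξ ↦ ?_⟩
  have hE : Integrable (fun p : V × ℝ ↦ cexp (↑(-2 * Real.pi * inner ℝ p.1 ξ) * I) * K p)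
      (volume.prod μ) := by
    refine hK.mono ((Continuous.aestronglyMeasurable (by fun_prop)).mul
      hK.aestronglyMeasurable) (.of_forall fun p ↦ ?_)
    rw [norm_mul, norm_exp_ofReal_mul_I, one_mul]
  simp only [Real.fourier_eq', smul_eq_mul, ← integral_const_mul]
  rw [integral_integral_swap hE]
  refine integral_congr_ae ?_
  filter_upwards [hpos] with r hr
  have h := Measure.integral_comp_inv_smul_of_nonneg volume
    (fun x : V ↦ cexp (↑(-2 * Real.pi * inner ℝ x (r • ξ)) * I) * G x) hr.le
  have hinner (x : V) : inner ℝ (r⁻¹ • x) (r • ξ) = inner ℝ x ξ := by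
    rw [real_inner_smul_left, real_inner_smul_right, inv_mul_cancel_left₀ hr.ne']
  simp only [hinner] at h
  simp only [hK_def, mul_left_comm (cexp _), integral_const_mul]
  rw [h, Complex.real_smul, ofReal_inv, ofReal_pow, inv_mul_cancel_left₀]
  exact pow_ne_zero _ (by exact_mod_cast hr.ne')

/-- The subordination formula for Bessel potentials. -/
theorem integral_rpow_mul_exp_neg_one_add_sq {s : ℝ} (hs : 0 < s) (y : ℝ) :
    ∫ r in Set.Ioi (0 : ℝ), r ^ (s - 1) * Real.exp (-(1 + y ^ 2) * r ^ 2) =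
      Real.Gamma (s / 2) / 2 * (1 + y ^ 2) ^ (-s / 2) := by
  have h := integral_rpow_mul_exp_neg_mul_rpow (p := 2) (q := s - 1) (b := 1 + y ^ 2)
    two_pos (by linarith) (by positivity)
  simp only [Real.rpow_two, sub_add_cancel] at h
  rw [h]; ring_nf

/-- `L_s * ∂^α δ ∈ L¹(ℝⁿ)` for `s > |α|`: there is an integrable `g` whose Fourier
transform is `ξ ↦ (2πiξ)^α (1+|ξ|²)^(-s/2)`. -/
theorem besselKernel_deriv_integrable (n : ℕ) (α : Fin n → ℕ) (s : ℝ)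
    (hs : (∑ j, α j : ℝ) < s) :
    ∃ g : EuclideanSpace ℝ (Fin n) → ℂ, Integrable g ∧
      ∀ ξ : EuclideanSpace ℝ (Fin n),
        𝓕 g ξ = (∏ j, (2 * Real.pi * Complex.I * (ξ j : ℂ)) ^ (α j)) *
          ((1 : ℂ) + (‖ξ‖ : ℂ) ^ 2) ^ (-(s : ℂ) / 2) := by
  have hs0 : 0 < s := (Finset.sum_nonneg fun j _ ↦ (α j).cast_nonneg).trans_lt hs
  have hΓ : Real.Gamma (s / 2) ≠ 0 := (Real.Gamma_pos_of_pos (by positivity)).ne'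
  choose P hP using fun j ↦ exists_fourier_polynomial_mul_gaussian_eq (α j)
  set f : Fin n → ℝ → ℂ :=
    fun j x ↦ (P j).eval (x : ℂ) * cexp (-(Real.pi ^ 2 : ℝ) * x ^ 2)
  have hw : IntegrableOn (fun r : ℝ ↦ (((2 / Real.Gamma (s / 2)) *
      (r ^ (s - ∑ j, (α j : ℝ) - 1) * Real.exp (-1 * r ^ 2)) : ℝ) : ℂ)) (Set.Ioi 0) :=
    ((integrableOn_rpow_mul_exp_neg_mul_sq one_pos (by linarith)).const_mul _).ofReal
  obtain ⟨g, hg, hgξ⟩ := exists_integrable_fourier_eq_integral_dilation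
    (G := fun x : EuclideanSpace ℝ (Fin n) ↦ ∏ j, f j (x j))
    (integrable_euclideanSpace_prod fun j ↦
      integrable_polynomial_mul_gaussian (by positivity) (P j))
    (by fun_prop) hw
  refine ⟨g, hg, fun ξ ↦ ?_⟩
  have key : ∀ r ∈ Set.Ioi (0 : ℝ), (((2 / Real.Gamma (s / 2)) *
      (r ^ (s - ∑ j, (α j : ℝ) - 1) * Real.exp (-1 * r ^ 2)) : ℝ) : ℂ) *
        𝓕 (fun x : EuclideanSpace ℝ (Fin n) ↦ ∏ j, f j (x j)) (r • ξ) =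
      (∏ j, (2 * Real.pi * Complex.I * (ξ j : ℂ)) ^ (α j)) * (2 / Real.Gamma (s / 2) : ℝ) *
        ((r ^ (s - 1) * Real.exp (-(1 + ‖ξ‖ ^ 2) * r ^ 2) : ℝ) : ℂ) := by
    intro r hr
    have hr' : 0 < r := hr
    have hexp : ∏ j, cexp (-((r • ξ) j : ℂ) ^ 2) = (Real.exp (-(r ^ 2 * ‖ξ‖ ^ 2)) : ℂ) := by
      rw [← Complex.exp_sum, EuclideanSpace.real_norm_sq_eq]
      simp [mul_pow, Finset.mul_sum]
    have hpow : ∏ j, (2 * Real.pi * Complex.I * ((r • ξ) j : ℂ)) ^ (α j) =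
        (r ^ (∑ j, (α j : ℝ)) : ℝ) * ∏ j, (2 * Real.pi * Complex.I * (ξ j : ℂ)) ^ (α j) := by
      rw [← Nat.cast_sum, Real.rpow_natCast, ← Finset.prod_pow_eq_pow_sum, ofReal_prod,
        ← Finset.prod_mul_distrib]
      refine Finset.prod_congr rfl fun j _ ↦ ?_
      simp only [PiLp.smul_apply, smul_eq_mul, ofReal_mul, ofReal_pow]
      ring
    have hrs : r ^ (s - 1) = r ^ (s - ∑ j, (α j : ℝ) - 1) * r ^ (∑ j, (α j : ℝ)) := by
      rw [← Real.rpow_add hr']; ring_nf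
    have hee : Real.exp (-(1 + ‖ξ‖ ^ 2) * r ^ 2) =
        Real.exp (-1 * r ^ 2) * Real.exp (-(r ^ 2 * ‖ξ‖ ^ 2)) := by
      rw [← Real.exp_add]; ring_nf
    rw [fourier_euclideanSpace_prod, Finset.prod_congr rfl fun j _ ↦ hP j ((r • ξ) j),
      Finset.prod_mul_distrib, hexp, hpow, hrs, hee]
    push_cast
    ring
  rw [hgξ, setIntegral_congr_fun measurableSet_Ioi key, integral_const_mul,
    integral_complex_ofReal,
    integral_rpow_mul_exp_neg_one_add_sq hs0, mul_assoc, ← ofReal_mul, ← mul_assoc,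
    div_mul_div_cancel₀ hΓ, div_self two_ne_zero, one_mul, ofReal_cpow (by positivity)]
  push_cast
  rfl
end
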